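/- For the regular hyperbolic helical polygon, for every k ∈ ℤ the vector T_k ∧₋ T_{k+1} is space-like: |T_k ∧₋ T_{k+1}|₀² = sinh²(ρ₀) > 0, where ρ₀ = 2 arcsinh(a sinh(l/2)). -/

import Mathlib

noncomputable section

/-- The Minkowski pseudo-scalar product on ℝ^{1,2} = ℝ³. -/
def mdot (a b : Fin 3 → ℝ) : ℝ := -(a 0 * b 0) + a 1 * b 1 + a 2 * b 2

/-- The Minkowski cross product on ℝ^{1,2} = ℝ³. -/
def mcross (a b : Fin 3 → ℝ) : Fin 3 → ℝ :=
  ![-(a 1 * b 2 - a 2 * b 1), a 2 * b 0 - a 0 * b 2, a 0 * b 1 - a 1 * b 0]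

/-- Tangent vectors of the regular hyperbolic helical polygon with side length
`l` and torsion parameter `b` (with `a = √(1 + b²)`). -/
def hhpT (l b : ℝ) (k : ℤ) : Fin 3 → ℝ :=
  ![Real.sqrt (1 + b ^ 2) * Real.cosh (l / 2 + k * l),
    Real.sqrt (1 + b ^ 2) * Real.sinh (l / 2 + k * l), b]

/-!
Since `a² - b² = 1`, the tangent vectors lie on the upper sheet of the hyperboloid `⟨x, x⟩ = -1`,
a model of the hyperbolic plane in which `-⟨x, y⟩` is the hyperbolic cosine of the distance between
`x` and `y`. The Minkowski Lagrange identity turns this into `|x ∧ y|² = cosh² ρ - 1 = sinh² ρ` for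
points at distance `ρ`. Finally `-⟨T_j, T_k⟩ = a² cosh t - b² = 1 + 2 (a sinh (t / 2))²` for
`t = (k - j) l`, so the distance from `T_j` to `T_k` is `2 arsinh (a sinh (t / 2))` up to sign.
-/

theorem mdot_comm (x y : Fin 3 → ℝ) : mdot x y = mdot y x := by
  simp only [mdot, mul_comm]

theorem mdot_mcross_mcross (x y z w : Fin 3 → ℝ) :
    mdot (mcross x y) (mcross z w) = mdot x w * mdot y z - mdot x z * mdot y w := by
  simp only [mdot, mcross, Matrix.cons_val]
  ring

theorem mdot_mcross_self_eq_sinh_sq {x y : Fin 3 → ℝ} {ρ : ℝ} (hx : mdot x x = -1)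
    (hy : mdot y y = -1) (hxy : mdot x y = -Real.cosh ρ) :
    mdot (mcross x y) (mcross x y) = Real.sinh ρ ^ 2 := by
  rw [mdot_mcross_mcross, mdot_comm y x, hx, hy, hxy, Real.sinh_sq]
  ring

theorem cosh_two_mul_eq_one_add (x : ℝ) : Real.cosh (2 * x) = 1 + 2 * Real.sinh x ^ 2 := by
  rw [Real.cosh_two_mul, Real.cosh_sq]
  ring

theorem mdot_hhpT (l b : ℝ) (j k : ℤ) :
    mdot (hhpT l b j) (hhpT l b k) =
      -Real.cosh (2 * Real.arsinh (√(1 + b ^ 2) * Real.sinh ((k - j) * (l / 2)))) := by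
  have ha : √(1 + b ^ 2) ^ 2 = 1 + b ^ 2 := Real.sq_sqrt (by positivity)
  have hsub : l / 2 + k * l - (l / 2 + j * l) = 2 * ((k - j) * (l / 2)) := by ring
  calc mdot (hhpT l b j) (hhpT l b k)
      = b ^ 2 - √(1 + b ^ 2) ^ 2 * Real.cosh (l / 2 + k * l - (l / 2 + j * l)) := by
        rw [Real.cosh_sub]
        simp only [mdot, hhpT, Matrix.cons_val]
        ring
    _ = -(1 + 2 * (√(1 + b ^ 2) * Real.sinh ((k - j) * (l / 2))) ^ 2) := by
        rw [hsub, cosh_two_mul_eq_one_add, mul_pow, ha]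
        ring
    _ = -Real.cosh (2 * Real.arsinh (√(1 + b ^ 2) * Real.sinh ((k - j) * (l / 2)))) := by
        rw [cosh_two_mul_eq_one_add, Real.sinh_arsinh]

theorem mdot_hhpT_self (l b : ℝ) (k : ℤ) : mdot (hhpT l b k) (hhpT l b k) = -1 := by
  simp [mdot_hhpT]

theorem mdot_mcross_hhpT_self (l b : ℝ) (j k : ℤ) :
    mdot (mcross (hhpT l b j) (hhpT l b k)) (mcross (hhpT l b j) (hhpT l b k)) =
      Real.sinh (2 * Real.arsinh (√(1 + b ^ 2) * Real.sinh ((k - j) * (l / 2)))) ^ 2 :=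
  mdot_mcross_self_eq_sinh_sq (mdot_hhpT_self l b j) (mdot_hhpT_self l b k) (mdot_hhpT l b j k)

theorem hhp_binormal_spacelike_general (l b : ℝ) (hl : l ≠ 0) {j k : ℤ} (hjk : j ≠ k) :
    mdot (mcross (hhpT l b j) (hhpT l b k)) (mcross (hhpT l b j) (hhpT l b k)) =
        Real.sinh (2 * Real.arsinh (√(1 + b ^ 2) * Real.sinh ((k - j) * (l / 2)))) ^ 2 ∧
      0 < mdot (mcross (hhpT l b j) (hhpT l b k)) (mcross (hhpT l b j) (hhpT l b k)) := by
  have ha : √(1 + b ^ 2) ≠ 0 := Real.sqrt_ne_zero'.mpr (by positivity)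
  have hkj : (k - j : ℝ) ≠ 0 := sub_ne_zero.mpr (mod_cast hjk.symm)
  have hsinh : Real.sinh ((k - j) * (l / 2)) ≠ 0 :=
    Real.sinh_ne_zero.mpr (mul_ne_zero hkj (div_ne_zero hl two_ne_zero))
  have hρ : 2 * Real.arsinh (√(1 + b ^ 2) * Real.sinh ((k - j) * (l / 2))) ≠ 0 :=
    mul_ne_zero two_ne_zero (Real.arsinh_eq_zero_iff.not.mpr (mul_ne_zero ha hsinh))
  refine ⟨mdot_mcross_hhpT_self l b j k, ?_⟩
  rw [mdot_mcross_hhpT_self]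
  exact sq_pos_of_ne_zero (Real.sinh_ne_zero.mpr hρ)

/-- For the regular hyperbolic helical polygon, `T_k ∧₋ T_{k+1}` is space-like:
`|T_k ∧₋ T_{k+1}|₀² = sinh²(ρ₀) > 0`, with `ρ₀ = 2 arcsinh(a sinh(l/2))`. -/
theorem hhp_binormal_spacelike (l b : ℝ) (hl : 0 < l) (hb : 0 < b) :
    ∀ k : ℤ,
      mdot (mcross (hhpT l b k) (hhpT l b (k + 1))) (mcross (hhpT l b k) (hhpT l b (k + 1))) =
        (Real.sinh (2 * Real.arsinh (Real.sqrt (1 + b ^ 2) * Real.sinh (l / 2)))) ^ 2 ∧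
      0 < mdot (mcross (hhpT l b k) (hhpT l b (k + 1)))
            (mcross (hhpT l b k) (hhpT l b (k + 1))) := by
  intro k
  simpa using hhp_binormal_spacelike_general l b hl.ne' (Int.lt_succ k).ne
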